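/- arXiv:1806.02183 — 2 statements merged into one kernel-verified Lean document; each statement's English description precedes it below -/
import Mathlib

section
/- Let q be a prime power, k = 𝔽̄_q, and let F ∈ 𝔽_q[x,y,z] be the defining polynomial of the Dickson–Guralnick–Zieve curve C. Let f(X,Y) = F(X,Y,1) ∈ k[X,Y], let K = Frac(k[X,Y]/(f)) be the function field of C, and let x ∈ K be the image of X. Then the field extension K / k(x) is a Galois extension of degree q³ − q²; that is, the point P = (0:1:0) ∈ ℙ²(𝔽_q) is an outer Galois point for C. -/
/-!
The group of affine substitutions `(x, y) ↦ (x, a y + b x + c)`, with `a ∈ 𝔽_q^×` and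
`b, c ∈ 𝔽_q`, has order `(q - 1) q² = q³ - q²`. Raising to a `q`-power is `𝔽_q`-linear, so such a
substitution multiplies both determinants `D₁` and `D₂` by `a`, and hence fixes their quotient
`f(x, Y) ∈ k[x][Y]`. Comparing leading terms in `Y` in `D₂ F = D₁` shows that `f` is monic in `Y`
of degree `q³ - q²` (`dehom_monic`). Therefore nonzero multiples of `f` have `Y`-degree at least
`q³ - q²`; since the kernel of `k[x][Y] → K` is `(f)`, this makes `x` transcendental over `k`,
makes `f` the minimal polynomial of the image `y` over `k(x)`, and forces the `q³ - q²` roots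
`a y + b x + c` of `f` in `K` to be pairwise distinct. So `f` splits in `K = k(x)(y)` with simple
roots, and `K / k(x)` is Galois of degree `q³ - q²` (`galois_of_many_roots`).

That `P = (0:1:0)` is not on `C` is read off along the curve `(a T : 1 : T)`, `a` an
indeterminate: there `D₁` and `D₂` have the same lowest-order term `(a^q - a) T^(q+1)`, so `F`
takes the value `1` at `T = 0`.
-/

open MvPolynomial

/-- The algebraic closure `k = 𝔽̄_q` of `𝔽_q`, `q = p^n`. -/
noncomputable abbrev DGZ_k (p n : ℕ) [Fact p.Prime] : Type :=
  AlgebraicClosure (GaloisField p n)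

/-- The determinant `D₁ = det [[x, x^q, x^{q³}], [y, y^q, y^{q³}], [z, z^q, z^{q³}]]`
over the finite field `𝔽_q` with `q = p^n`. -/
noncomputable def DGZ_D1 (p n : ℕ) [Fact p.Prime] : MvPolynomial (Fin 3) (GaloisField p n) :=
  Matrix.det (Matrix.of fun i j : Fin 3 =>
    (X i : MvPolynomial (Fin 3) (GaloisField p n)) ^ (![1, p ^ n, (p ^ n) ^ 3] j))

/-- The determinant `D₂ = det [[x, x^q, x^{q²}], [y, y^q, y^{q²}], [z, z^q, z^{q²}]]`
over the finite field `𝔽_q` with `q = p^n`. -/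
noncomputable def DGZ_D2 (p n : ℕ) [Fact p.Prime] : MvPolynomial (Fin 3) (GaloisField p n) :=
  Matrix.det (Matrix.of fun i j : Fin 3 =>
    (X i : MvPolynomial (Fin 3) (GaloisField p n)) ^ (![1, p ^ n, (p ^ n) ^ 2] j))

/-- The defining polynomial of the DGZ curve, regarded over the algebraic closure `k = 𝔽̄_q`. -/
noncomputable def DGZ_Fbar (p n : ℕ) [Fact p.Prime]
    (F : MvPolynomial (Fin 3) (GaloisField p n)) :
    MvPolynomial (Fin 3) (DGZ_k p n) :=
  MvPolynomial.map (algebraMap (GaloisField p n) (AlgebraicClosure (GaloisField p n))) F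

/-- The dehomogenization `f(X, Y) = F(X, Y, 1) ∈ k[X, Y]` of the defining polynomial of the
DGZ curve. -/
noncomputable def DGZ_affine (p n : ℕ) [Fact p.Prime]
    (F : MvPolynomial (Fin 3) (GaloisField p n)) : MvPolynomial (Fin 2) (DGZ_k p n) :=
  MvPolynomial.aeval ![X 0, X 1, 1] (DGZ_Fbar p n F)

/-! ### A Galois criterion -/

namespace Polynomial.DGZ

/-- A monic generator `f` over an integrally closed `A` of the relations satisfied by a primitive
element `y` is its minimal polynomial over `Frac A`. If `f` has as many roots in the extension as
its degree, the extension is the splitting field of the separable polynomial `f`. -/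
theorem galois_of_many_roots {A K L : Type*} [CommRing A] [IsDomain A] [IsIntegrallyClosed A]
    [Field K] [Algebra A K] [IsFractionRing A K] [Field L] [Algebra A L] [Algebra K L]
    [IsScalarTower A K L] (f : A[X]) (hf : f.Monic) (y : L) (hy : aeval y f = 0)
    (hmin : ∀ P : A[X], aeval y P = 0 → f ∣ P) (hgen : IntermediateField.adjoin K {y} = ⊤)
    (S : Finset L) (hS : ∀ s ∈ S, aeval s f = 0) (hcard : f.natDegree ≤ S.card) :
    IsGalois K L ∧ Module.finrank K L = f.natDegree := by
  have hinj : Function.Injective (algebraMap A L) := by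
    rw [IsScalarTower.algebraMap_eq A K L]
    exact (algebraMap K L).injective.comp (IsFractionRing.injective A K)
  have : FaithfulSMul A L := (faithfulSMul_iff_algebraMap_injective A L).2 hinj
  have hint : IsIntegral A y := ⟨f, hf, hy⟩
  have hm : f = minpoly A y := by
    refine IsIntegrallyClosed.minpoly.unique hf hy fun Q hQ hQy => ?_
    exact degree_le_of_dvd (hmin Q hQy) hQ.ne_zero
  have hmK : minpoly K y = f.map (algebraMap A K) := by
    rw [minpoly.isIntegrallyClosed_eq_field_fractions' K hint, ← hm]
  have hintK : IsIntegral K y := hint.tower_top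
  have hfin : Module.finrank K L = f.natDegree := by
    rw [← IntermediateField.finrank_top', ← hgen, IntermediateField.adjoin.finrank hintK, hmK,
      hf.natDegree_map]
  refine ⟨?_, hfin⟩
  have hne : f.map (algebraMap A L) ≠ 0 := (hf.map _).ne_zero
  have hroots : S.val = (f.map (algebraMap A L)).roots := by
    refine Multiset.eq_of_le_of_card_le ?_ ?_
    · rw [Multiset.le_iff_subset S.nodup]
      intro s hs
      rw [mem_roots hne, IsRoot.def, eval_map_algebraMap]
      exact hS s hs
    · refine (card_roots' _).trans ?_
      rwa [hf.natDegree_map]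
  have hsplit : (f.map (algebraMap A L)).Splits := by
    rw [splits_iff_card_roots]
    refine le_antisymm (card_roots' _) ?_
    rwa [← hroots, hf.natDegree_map]
  have hsep : (f.map (algebraMap A L)).Separable := by
    rw [← nodup_roots_iff_of_splits hne hsplit, ← hroots]
    exact S.nodup
  have hmapmap : (f.map (algebraMap A K)).map (algebraMap K L) = f.map (algebraMap A L) := by
    rw [Polynomial.map_map, ← IsScalarTower.algebraMap_eq]
  have : (f.map (algebraMap A K)).IsSplittingField K L := by
    rw [isSplittingField_iff_intermediateField]
    refine ⟨by rwa [hmapmap], ?_⟩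
    rw [eq_top_iff, ← hgen]
    refine IntermediateField.adjoin.mono _ _ _ ?_
    rw [Set.singleton_subset_iff, mem_rootSet']
    refine ⟨by rwa [hmapmap], ?_⟩
    rwa [aeval_map_algebraMap]
  refine IsGalois.of_separable_splitting_field (p := f.map (algebraMap A K)) ?_
  rw [← separable_map (algebraMap K L), hmapmap]
  exact hsep

/-! ### The determinants over an arbitrary ring -/

variable {p n : ℕ} [Fact p.Prime]

/-- The determinant whose rows are `(t, t^q, t^N)` for `t = u, v, w`. -/
def dgzDet {R : Type*} [CommRing R] (q N : ℕ) (u v w : R) : R :=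
  u * (v ^ q * w ^ N - v ^ N * w ^ q) - u ^ q * (v * w ^ N - v ^ N * w)
    + u ^ N * (v * w ^ q - v ^ q * w)

theorem eval₂_D1 {R : Type*} [CommRing R] (σ : GaloisField p n →+* R) (u v w : R) :
    MvPolynomial.eval₂ σ ![u, v, w] (DGZ_D1 p n) = dgzDet (p ^ n) ((p ^ n) ^ 3) u v w := by
  simp only [DGZ_D1, dgzDet, Matrix.det_fin_three, ← MvPolynomial.coe_eval₂Hom]
  simp
  ring

theorem eval₂_D2 {R : Type*} [CommRing R] (σ : GaloisField p n →+* R) (u v w : R) :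
    MvPolynomial.eval₂ σ ![u, v, w] (DGZ_D2 p n) = dgzDet (p ^ n) ((p ^ n) ^ 2) u v w := by
  simp only [DGZ_D2, dgzDet, Matrix.det_fin_three, ← MvPolynomial.coe_eval₂Hom]
  simp
  ring

theorem dgzDet_mul_eval₂ {F : MvPolynomial (Fin 3) (GaloisField p n)}
    (hF : DGZ_D2 p n * F = DGZ_D1 p n) {R : Type*} [CommRing R] (σ : GaloisField p n →+* R)
    (u v w : R) :
    dgzDet (p ^ n) ((p ^ n) ^ 2) u v w * MvPolynomial.eval₂ σ ![u, v, w] F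
      = dgzDet (p ^ n) ((p ^ n) ^ 3) u v w := by
  rw [← eval₂_D2 σ, ← eval₂_D1 σ, ← MvPolynomial.eval₂_mul, hF]

theorem galoisField_pow (hn : 0 < n) (m : ℕ) (a : GaloisField p n) : a ^ (p ^ n) ^ m = a := by
  have := Fintype.ofFinite (GaloisField p n)
  have h := FiniteField.pow_card_pow m a
  rwa [← Nat.card_eq_fintype_card, GaloisField.card p n hn.ne'] at h

/-- `q`-powers are `𝔽_q`-linear. -/
theorem linear_comb_pow (hn : 0 < n) {R : Type*} [CommRing R] [CharP R p]
    (σ : GaloisField p n →+* R) (m : ℕ) (a b c : GaloisField p n) (u v w : R) :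
    (σ a * v + σ b * u + σ c * w) ^ (p ^ n) ^ m
      = σ a * v ^ (p ^ n) ^ m + σ b * u ^ (p ^ n) ^ m + σ c * w ^ (p ^ n) ^ m := by
  have key := fun x : GaloisField p n => galoisField_pow hn m x
  have e : (p ^ n) ^ m = p ^ (n * m) := (pow_mul p n m).symm
  rw [e] at key ⊢
  rw [add_pow_char_pow, add_pow_char_pow, mul_pow, mul_pow, mul_pow, ← map_pow, ← map_pow,
    ← map_pow, key, key, key]

/-- A substitution `v ↦ a v + b u + c w` is a row operation up to the factor `a`, applied to all
three columns at once because `q`-powers are `𝔽_q`-linear. -/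
theorem dgzDet_linear_comb (hn : 0 < n) {R : Type*} [CommRing R] [CharP R p]
    (σ : GaloisField p n →+* R) (m : ℕ) (a b c : GaloisField p n) (u v w : R) :
    dgzDet (p ^ n) ((p ^ n) ^ m) u (σ a * v + σ b * u + σ c * w) w
      = σ a * dgzDet (p ^ n) ((p ^ n) ^ m) u v w := by
  have h1 := linear_comb_pow hn σ 1 a b c u v w
  rw [pow_one] at h1
  simp only [dgzDet, h1, linear_comb_pow hn σ m a b c u v w]
  ring

/-! ### The dehomogenization as a polynomial in one variable -/

theorem natDegree_leadingCoeff_trinomial {A : Type*} [CommRing A] {N q : ℕ} (hq : 1 < q)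
    (hN : q < N) (c a b : A) (hc : c ≠ 0) :
    (C c * X ^ N + C a * X ^ q + C b * X).natDegree = N ∧
      (C c * X ^ N + C a * X ^ q + C b * X).leadingCoeff = c := by
  have hnd : (C c * X ^ N + C a * X ^ q + C b * X).natDegree = N := by
    have hle : (C a * X ^ q + C b * X).natDegree ≤ q := by
      refine natDegree_add_le_of_degree_le (natDegree_C_mul_X_pow_le _ _) ?_
      exact (natDegree_C_mul_le _ _).trans (natDegree_X_le.trans hq.le)
    rw [add_assoc, natDegree_add_eq_left_of_natDegree_lt, natDegree_C_mul_X_pow _ _ hc]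
    rw [natDegree_C_mul_X_pow _ _ hc]
    omega
  refine ⟨hnd, ?_⟩
  rw [leadingCoeff, hnd]
  simp [coeff_X_pow, coeff_X, hN.ne', (hq.trans hN).ne]

theorem X_pow_sub_X_ne_zero {k : Type*} [Field k] {q : ℕ} (hq : 1 < q) :
    (X ^ q - X : k[X]) ≠ 0 := by
  intro h
  have := congrArg (fun P : k[X] => P.coeff q) h
  simp [coeff_X, hq.ne] at this

/-- The inclusion `𝔽_q → k[x][Y]`. -/
noncomputable def constHom (p n : ℕ) [Fact p.Prime] :
    GaloisField p n →+* (DGZ_k p n)[X][X] :=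
  (C.comp C).comp (algebraMap (GaloisField p n) (DGZ_k p n))

/-- `F(x, Y, 1)` as a polynomial in `Y` over `k[x]`. -/
noncomputable def dehom (p n : ℕ) [Fact p.Prime]
    (F : MvPolynomial (Fin 3) (GaloisField p n)) : (DGZ_k p n)[X][X] :=
  MvPolynomial.eval₂ (constHom p n) ![C X, X, 1] F

theorem one_lt_q (hn : 0 < n) : 1 < p ^ n := Nat.one_lt_pow hn.ne' (Fact.out : p.Prime).one_lt

theorem dgzDet_dehom (hn : 0 < n) {m : ℕ} (hm : 1 < m) :
    (dgzDet (p ^ n) ((p ^ n) ^ m) (C X) X 1 : (DGZ_k p n)[X][X]).natDegree = (p ^ n) ^ m ∧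
    (dgzDet (p ^ n) ((p ^ n) ^ m) (C X) X 1 : (DGZ_k p n)[X][X]).leadingCoeff
      = X ^ p ^ n - X := by
  have hq := one_lt_q (p := p) hn
  have hlt : p ^ n < (p ^ n) ^ m := by
    simpa using Nat.pow_lt_pow_right hq hm
  have := natDegree_leadingCoeff_trinomial hq hlt (X ^ p ^ n - X : (DGZ_k p n)[X])
    (X - X ^ (p ^ n) ^ m) (X ^ (p ^ n) ^ m - X ^ p ^ n) (X_pow_sub_X_ne_zero hq)
  have hdet : (dgzDet (p ^ n) ((p ^ n) ^ m) (C X) X 1 : (DGZ_k p n)[X][X]) =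
      C (X ^ p ^ n - X) * X ^ (p ^ n) ^ m + C (X - X ^ (p ^ n) ^ m) * X ^ p ^ n
        + C (X ^ (p ^ n) ^ m - X ^ p ^ n) * X := by
    simp only [dgzDet, map_sub, map_pow]
    ring
  rwa [hdet]

theorem dehom_monic (hn : 0 < n) {F : MvPolynomial (Fin 3) (GaloisField p n)}
    (hF : DGZ_D2 p n * F = DGZ_D1 p n) :
    (dehom p n F).Monic ∧ (dehom p n F).natDegree = (p ^ n) ^ 3 - (p ^ n) ^ 2 := by
  have h := dgzDet_mul_eval₂ hF (constHom p n) (C X) X 1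
  have h3 := dgzDet_dehom (p := p) hn (m := 3) (by norm_num)
  have h2 := dgzDet_dehom (p := p) hn (m := 2) (by norm_num)
  have hc := X_pow_sub_X_ne_zero (k := DGZ_k p n) (one_lt_q (p := p) hn)
  change _ * dehom p n F = _ at h
  have hmonic : (dehom p n F).Monic := by
    have := congrArg leadingCoeff h
    rw [leadingCoeff_mul, h3.2, h2.2] at this
    exact mul_left_cancel₀ hc (this.trans (mul_one _).symm)
  refine ⟨hmonic, ?_⟩
  have := congrArg natDegree h
  have hne : dgzDet (p ^ n) ((p ^ n) ^ 2) (C X) X (1 : (DGZ_k p n)[X][X]) ≠ 0 := by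
    intro h0
    rw [h0, leadingCoeff_zero] at h2
    exact hc h2.2.symm
  rw [natDegree_mul hne hmonic.ne_zero, h3.1, h2.1] at this
  omega

/-- `f` is invariant under the affine substitutions `Y ↦ a Y + b x + c` over `𝔽_q`. -/
theorem dehom_comp (hn : 0 < n) {F : MvPolynomial (Fin 3) (GaloisField p n)}
    (hF : DGZ_D2 p n * F = DGZ_D1 p n) (a b c : GaloisField p n) (ha : a ≠ 0) :
    (dehom p n F).comp
      (constHom p n a * X + constHom p n b * C X + constHom p n c * 1) = dehom p n F := by
  set l : (DGZ_k p n)[X][X] :=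
    constHom p n a * X + constHom p n b * C X + constHom p n c * 1 with hl
  have hcomp : (dehom p n F).comp l = MvPolynomial.eval₂ (constHom p n) ![C X, l, 1] F := by
    rw [← coe_compRingHom_apply, dehom, MvPolynomial.hom_eval₂]
    congr 1
    · ext x
      simp [constHom]
    · ext i : 1
      fin_cases i <;> simp
  have h := dgzDet_mul_eval₂ hF (constHom p n) (C X) X 1
  have h' := dgzDet_mul_eval₂ hF (constHom p n) (C X) l 1
  rw [hl, dgzDet_linear_comb hn, dgzDet_linear_comb hn, ← hl, ← hcomp, ← h, mul_assoc] at h'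
  have hσ : constHom p n a ≠ 0 := by
    rwa [Ne, map_eq_zero_iff _ (constHom p n).injective]
  refine mul_left_cancel₀ ?_ (mul_left_cancel₀ hσ h')
  intro h0
  have h2 := dgzDet_dehom (p := p) hn (m := 2) (by norm_num)
  rw [h0, leadingCoeff_zero] at h2
  exact X_pow_sub_X_ne_zero (one_lt_q (p := p) hn) h2.2.symm

/-- Along `(a T : 1 : T)` the lowest-order term of the determinant is `(a^q - a) T^(q+1)`, which
does not depend on `N`. -/
theorem dgzDet_curve {A : Type*} [CommRing A] (a : A) {q N : ℕ} (hq : 1 < q) (hN : q < N) :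
    (dgzDet q N (C a * X) 1 X : A[X]) = X ^ (q + 1) *
      (C (a ^ q - a) + X * (C (a - a ^ N) * X ^ (N - q - 1) + C (a ^ N - a ^ q) * X ^ (N - 2)))
      := by
  obtain ⟨s, rfl⟩ : ∃ s, N = q + 1 + s := ⟨N - q - 1, by omega⟩
  obtain ⟨r, rfl⟩ : ∃ r, q = r + 1 := ⟨q - 1, by omega⟩
  have e1 : r + 1 + 1 + s - (r + 1) - 1 = s := by omega
  have e2 : r + 1 + 1 + s - 2 = r + s := by omega
  rw [e1, e2]
  simp only [dgzDet, map_sub, map_pow]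
  ring

/-- The value of `F` at `(0 : 1 : 0)`. -/
theorem eval_infty (hn : 0 < n) {F : MvPolynomial (Fin 3) (GaloisField p n)}
    (hF : DGZ_D2 p n * F = DGZ_D1 p n) :
    MvPolynomial.eval ![0, 1, 0] (DGZ_Fbar p n F) = 1 := by
  have hq := one_lt_q (p := p) hn
  have hlt : ∀ m, 1 < m → p ^ n < (p ^ n) ^ m := fun m hm => by
    simpa using Nat.pow_lt_pow_right hq hm
  have h := dgzDet_mul_eval₂ hF (constHom p n) (C X * X) 1 X
  rw [dgzDet_curve _ hq (hlt 2 (by norm_num)), dgzDet_curve _ hq (hlt 3 (by norm_num)),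
    mul_assoc] at h
  have h0 := congrArg (Polynomial.eval 0)
    (mul_left_cancel₀ (pow_ne_zero _ Polynomial.X_ne_zero) h)
  simp only [eval_mul, eval_add, eval_C, eval_X, zero_mul, add_zero] at h0
  have h1 := mul_left_cancel₀ (X_pow_sub_X_ne_zero hq) (h0.trans (mul_one _).symm)
  rw [← coe_evalRingHom, MvPolynomial.hom_eval₂] at h1
  have h2 := congrArg (Polynomial.evalRingHom 0) h1
  rw [MvPolynomial.hom_eval₂, map_one] at h2
  rw [DGZ_Fbar, MvPolynomial.eval_map]
  refine Eq.trans ?_ h2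
  congr 1
  · ext x
    simp [constHom]
  · ext i : 1
    fin_cases i <;> simp


/-! ### The function field -/

/-- `Y`, `x` and `1` are linearly independent over `k` in `k[x][Y]`. -/
theorem linear_eq_zero {k : Type*} [Field k] {v b w : k}
    (h : (C (C v) * X + C (C b) * C X + C (C w) * 1 : k[X][X]) = 0) : v = 0 ∧ b = 0 ∧ w = 0 := by
  have h1 := congrArg (fun P : k[X][X] => P.coeff 1) h
  have h0 := congrArg (fun P : k[X][X] => P.coeff 0) h
  simp only [mul_one, ← C_mul, coeff_add, coeff_C_mul, coeff_X_one, coeff_C_zero, coeff_zero,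
    coeff_C_of_ne_zero one_ne_zero, add_zero, coeff_X_zero, mul_zero, zero_add] at h1 h0
  have h01 := congrArg (fun P : k[X] => P.coeff 1) h0
  have h00 := congrArg (fun P : k[X] => P.coeff 0) h0
  simp at h01 h00
  exact ⟨by simpa using h1, h01, h00⟩

/-- The isomorphism `k[X, Y] → k[x][Y]`, `X ↦ x`, `Y ↦ Y`; only its surjectivity is needed. -/
noncomputable def toNested (p n : ℕ) [Fact p.Prime] :
    MvPolynomial (Fin 2) (DGZ_k p n) →ₐ[DGZ_k p n] (DGZ_k p n)[X][X] :=
  MvPolynomial.aeval ![C X, X]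

theorem toNested_affine (F : MvPolynomial (Fin 3) (GaloisField p n)) :
    toNested p n (DGZ_affine p n F) = dehom p n F := by
  rw [DGZ_affine, DGZ_Fbar, dehom, MvPolynomial.aeval_map_algebraMap,
    MvPolynomial.aeval_def, ← AlgHom.coe_toRingHom, MvPolynomial.hom_eval₂]
  congr 1
  · ext a
    simp only [RingHom.comp_apply, IsScalarTower.algebraMap_apply (GaloisField p n) (DGZ_k p n)
      (MvPolynomial (Fin 2) (DGZ_k p n)), constHom]
    simp [Polynomial.algebraMap_apply]
  · ext i : 1
    fin_cases i <;> simp [toNested]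

theorem toNested_surjective : Function.Surjective (toNested p n) := by
  let η : (DGZ_k p n)[X][X] →+* MvPolynomial (Fin 2) (DGZ_k p n) :=
    eval₂RingHom (aeval (MvPolynomial.X 0)).toRingHom (MvPolynomial.X 1)
  have h : (toNested p n).toRingHom.comp η = RingHom.id _ := by
    refine Polynomial.ringHom_ext' (Polynomial.ringHom_ext ?_ ?_) ?_
    · intro a
      simp [η, toNested, Polynomial.algebraMap_apply]
    · simp [η, toNested]
    · simp [η, toNested]
  exact fun P => ⟨η P, DFunLike.congr_fun h P⟩

/-- The degree `q³ - q²` exceeds `1`, so that no nonzero linear polynomial in `Y` is a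
multiple of `f`. -/
theorem one_lt_degree (hn : 0 < n) : 1 < (p ^ n) ^ 3 - (p ^ n) ^ 2 := by
  obtain ⟨r, hr⟩ : ∃ r, p ^ n = r + 2 :=
    ⟨p ^ n - 2, by have := one_lt_q (p := p) hn; omega⟩
  rw [hr]
  apply Nat.lt_sub_of_add_lt
  nlinarith [Nat.zero_le (r ^ 3), Nat.zero_le (r ^ 2)]

/-- The number of substitutions `(x, y) ↦ (x, a y + b x + c)` over `𝔽_q` with `a ≠ 0`. -/
theorem card_params (hn : 0 < n) [Fintype (GaloisField p n)] [Fintype (GaloisField p n)ˣ] :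
    Fintype.card ((GaloisField p n)ˣ × GaloisField p n × GaloisField p n)
      = (p ^ n) ^ 3 - (p ^ n) ^ 2 := by
  have h : Fintype.card (GaloisField p n) = p ^ n := by
    rw [← Nat.card_eq_fintype_card, GaloisField.card p n hn.ne']
  rw [Fintype.card_prod, Fintype.card_prod, ← Nat.card_eq_fintype_card (α := (GaloisField p n)ˣ),
    Nat.card_units, Nat.card_eq_fintype_card, h]
  rw [Nat.sub_mul]
  congr 1 <;> ring

end Polynomial.DGZ

/-! ### The Galois point -/

/-- Let `K = Frac(k[X,Y]/(f))` be the function field of the DGZ curve `C`, where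
`f(X,Y) = F(X,Y,1)`, and let `x ∈ K` be the image of `X`.  (Here `K` is presented as any
field `L` equipped with a `k`-algebra map `φ` from `k[X,Y]` with kernel `(f)` whose image
generates `L` as a field of fractions.)  Then `K / k(x)` is a Galois extension of degree
`q³ − q²`; moreover `P = (0:1:0) ∉ C`, so `P` is an outer Galois point for `C`. -/
theorem DGZ_outer_galois_point (p n : ℕ) [Fact p.Prime] (hn : 0 < n)
    (F : MvPolynomial (Fin 3) (GaloisField p n)) (hF : DGZ_D2 p n * F = DGZ_D1 p n)
    (L : Type) [Field L] [Algebra (DGZ_k p n) L]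
    (φ : MvPolynomial (Fin 2) (DGZ_k p n) →ₐ[DGZ_k p n] L)
    (hker : RingHom.ker φ.toRingHom = Ideal.span {DGZ_affine p n F})
    (hfrac : ∀ y : L, ∃ a b : MvPolynomial (Fin 2) (DGZ_k p n), φ b ≠ 0 ∧ y = φ a / φ b) :
    IsGalois ↥(IntermediateField.adjoin (DGZ_k p n) {φ (X 0)}) L ∧
    Module.finrank ↥(IntermediateField.adjoin (DGZ_k p n) {φ (X 0)}) L
      = (p ^ n) ^ 3 - (p ^ n) ^ 2 ∧
    MvPolynomial.eval ![0, 1, 0] (DGZ_Fbar p n F) ≠ 0 := by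
  have hgal : IsGalois ↥(IntermediateField.adjoin (DGZ_k p n) {φ (X 0)}) L ∧
      Module.finrank ↥(IntermediateField.adjoin (DGZ_k p n) {φ (X 0)}) L
        = (p ^ n) ^ 3 - (p ^ n) ^ 2 := by
    obtain ⟨hmonic, hdeg⟩ := Polynomial.DGZ.dehom_monic hn hF
    set x := φ (X 0) with hx
    set y := φ (X 1) with hy
    set f := Polynomial.DGZ.dehom p n F with hf
    set K := IntermediateField.adjoin (DGZ_k p n) {x} with hK
    have hxK : x ∈ K := IntermediateField.mem_adjoin_simple_self _ _
    let ι : Polynomial (DGZ_k p n) →ₐ[DGZ_k p n] K := Polynomial.aeval ⟨x, hxK⟩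
    let _ : Algebra (Polynomial (DGZ_k p n)) K := ι.toRingHom.toAlgebra
    let _ : Algebra (Polynomial (DGZ_k p n)) L := ((algebraMap K L).comp ι.toRingHom).toAlgebra
    have : IsScalarTower (Polynomial (DGZ_k p n)) K L := IsScalarTower.of_algebraMap_eq' rfl
    have hι : ∀ P, algebraMap (Polynomial (DGZ_k p n)) L P = Polynomial.aeval x P := by
      intro P
      change algebraMap K L (ι P) = _
      rw [← Polynomial.aeval_algebraMap_apply]
      rfl
    -- evaluating the nested polynomial at `(x, y)` is `φ`
    have hφ : ∀ P, Polynomial.aeval y (Polynomial.DGZ.toNested p n P) = φ P := by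
      intro P
      have h : (Polynomial.aeval (R := Polynomial (DGZ_k p n)) y).toRingHom.comp
          (Polynomial.DGZ.toNested p n).toRingHom = φ.toRingHom := by
        refine MvPolynomial.ringHom_ext ?_ ?_
        · intro a
          simp [Polynomial.DGZ.toNested, Polynomial.algebraMap_apply, hι]
        · intro i
          fin_cases i <;> simp [Polynomial.DGZ.toNested, hι, ← hx, ← hy]
      exact DFunLike.congr_fun h P
    have hmin : ∀ P : Polynomial (Polynomial (DGZ_k p n)), Polynomial.aeval y P = 0 → f ∣ P := by
      intro P hP
      obtain ⟨G, rfl⟩ := Polynomial.DGZ.toNested_surjective P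
      rw [hφ] at hP
      have hG : G ∈ RingHom.ker φ.toRingHom := hP
      rw [hker, Ideal.mem_span_singleton] at hG
      rw [hf, ← Polynomial.DGZ.toNested_affine]
      exact map_dvd _ hG
    have hroot : Polynomial.aeval y f = 0 := by
      rw [hf, ← Polynomial.DGZ.toNested_affine, hφ]
      have : DGZ_affine p n F ∈ RingHom.ker φ.toRingHom := by
        rw [hker]
        exact Ideal.mem_span_singleton_self _
      exact this
    have hone : 1 < f.natDegree := by
      rw [hdeg]
      exact Polynomial.DGZ.one_lt_degree hn
    -- nonzero multiples of the monic polynomial `f` have `Y`-degree at least `q³ - q²`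
    have hsmall : ∀ P : Polynomial (Polynomial (DGZ_k p n)), P.natDegree ≤ 1 →
        Polynomial.aeval y P = 0 → P = 0 := by
      intro P hP h0
      by_contra hne
      exact hmonic.not_dvd_of_natDegree_lt hne (hP.trans_lt hone) (hmin P h0)
    -- `x` is transcendental over `k`
    have hinj : Function.Injective (algebraMap (Polynomial (DGZ_k p n)) K) := by
      rw [injective_iff_map_eq_zero]
      intro P hP
      have h1 : Polynomial.aeval y (Polynomial.C P) = 0 := by
        rw [Polynomial.aeval_C, IsScalarTower.algebraMap_apply _ K L, hP, map_zero]
      simpa using hsmall (Polynomial.C P) (by simp) h1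
    have : FaithfulSMul (Polynomial (DGZ_k p n)) K :=
      (faithfulSMul_iff_algebraMap_injective _ _).2 hinj
    have : IsFractionRing (Polynomial (DGZ_k p n)) K := by
      refine IsFractionRing.of_field _ _ ?_
      rintro ⟨z, hz⟩
      obtain ⟨r, s, rfl⟩ := (IntermediateField.mem_adjoin_simple_iff _ _).1 hz
      refine ⟨r, s, ?_⟩
      apply (algebraMap K L).injective
      rw [map_div₀, ← IsScalarTower.algebraMap_apply, ← IsScalarTower.algebraMap_apply, hι, hι]
      rfl
    have hgen : IntermediateField.adjoin K {y} = ⊤ := by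
      have hmem : ∀ P, φ P ∈ IntermediateField.adjoin K {y} := by
        intro P
        induction P using MvPolynomial.induction_on with
        | C a =>
          have : φ (C a) = algebraMap K L (algebraMap (DGZ_k p n) K a) := φ.commutes a
          rw [this]
          exact IntermediateField.algebraMap_mem _ _
        | add P Q hP hQ =>
          rw [map_add]
          exact add_mem hP hQ
        | mul_X P i hP =>
          rw [map_mul]
          refine mul_mem hP ?_
          fin_cases i
          · exact IntermediateField.algebraMap_mem _ (⟨x, hxK⟩ : K)
          · exact IntermediateField.mem_adjoin_simple_self _ _
      rw [eq_top_iff]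
      rintro z -
      obtain ⟨a, b, -, rfl⟩ := hfrac z
      exact div_mem (hmem a) (hmem b)
    -- the conjugates `a y + b x + c`
    have := Fintype.ofFinite (GaloisField p n)
    have := Fintype.ofFinite (GaloisField p n)ˣ
    let l : (GaloisField p n)ˣ × GaloisField p n × GaloisField p n →
        Polynomial (Polynomial (DGZ_k p n)) := fun t =>
      Polynomial.DGZ.constHom p n t.1 * Polynomial.X +
        Polynomial.DGZ.constHom p n t.2.1 * Polynomial.C Polynomial.X +
        Polynomial.DGZ.constHom p n t.2.2 * 1
    have hl : Function.Injective fun t => Polynomial.aeval y (l t) := by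
      intro t s hts
      have hlin : l t - l s = Polynomial.C (Polynomial.C
            (algebraMap (GaloisField p n) (DGZ_k p n) (t.1 - s.1))) * Polynomial.X
          + Polynomial.C (Polynomial.C
            (algebraMap (GaloisField p n) (DGZ_k p n) (t.2.1 - s.2.1))) *
              Polynomial.C Polynomial.X
          + Polynomial.C (Polynomial.C
            (algebraMap (GaloisField p n) (DGZ_k p n) (t.2.2 - s.2.2))) * 1 := by
        simp only [l, Polynomial.DGZ.constHom, RingHom.comp_apply, map_sub]
        ring
      have h0 : l t - l s = 0 := by
        refine hsmall _ ?_ ?_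
        · rw [hlin]
          compute_degree
        · rw [map_sub, sub_eq_zero]
          exact hts
      rw [hlin] at h0
      obtain ⟨h1, h2, h3⟩ := Polynomial.DGZ.linear_eq_zero h0
      rw [map_eq_zero, sub_eq_zero] at h1 h2 h3
      exact Prod.ext (Units.ext h1) (Prod.ext h2 h3)
    have key := Polynomial.DGZ.galois_of_many_roots (K := K) f hmonic y hroot hmin hgen
      (Finset.univ.map ⟨_, hl⟩) ?_ ?_
    · rwa [hdeg] at key
    · intro s hs
      obtain ⟨t, -, rfl⟩ := Finset.mem_map.1 hs
      change Polynomial.aeval (Polynomial.aeval y (l t)) f = 0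
      rw [← Polynomial.aeval_comp,
        Polynomial.DGZ.dehom_comp hn hF _ _ _ t.1.ne_zero]
      exact hroot
    · rw [Finset.card_map, Finset.card_univ, Polynomial.DGZ.card_params hn, hdeg]
  refine ⟨hgal.1, hgal.2, ?_⟩
  rw [Polynomial.DGZ.eval_infty hn hF]
  exact one_ne_zero
end

section
/- Let q be a prime power, k = 𝔽̄_q, and let C be the Dickson–Guralnick–Zieve curve with function field k(C). Every 𝔽_q-rational point of ℙ² is a Galois point for C: for each P ∈ ℙ²(𝔽_q), the field extension k(C) / π_P^* k(ℙ¹) induced by the projection π_P from P is Galois. That is, ℙ²(𝔽_q) ⊆ Δ(C). -/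
/-!
Let `P` be an `𝔽_q`-rational point. Choose `𝔽_q`-rational independent linear forms `v, u, s` with
`u, v` vanishing at `P`, and put `τ = u / v`, `η = s / v` in `k(C)`. For any independent linear
forms `L₁, L₂` over `k` vanishing at `P`, the function `τ` is a Möbius image of `L₁ / L₂`, so
`τ ∈ K = k(L₁ / L₂)`, and `k(C) = K(η)`.

On `C` the determinant `D₁` vanishes at `(x, y, 1)`. It is `GL₃(𝔽_q)`-semi-invariant, so the
determinant with rows `(f, f^q, f^{q³})`, `f = 1, τ, η`, is zero. Replacing `η` by a variable `T`
gives the polynomial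
`g = (τ^q - τ) T^{q³} + (τ - τ^{q³}) T^q + (τ^{q³} - τ^q) T` over `K`, which is additive and
`𝔽_q`-linear in `T`, so it vanishes on the `𝔽_q`-span of `1, τ, η`.

The curve lies on no line (`DGZ_linear_form_eq_zero_of_dvd`), since its equation has degree at
least `q³ - q² > 1` in `X`. Hence `1, τ, η` are `𝔽_q`-independent; then `τ ∉ 𝔽_q`, so `g` has
degree `q³`, and its `q³` distinct roots `a + bτ + cη` all lie in `k(C)`. So `k(C) = K(η)` is the
splitting field of a separable polynomial over `K` (`isGalois_of_frobenius_det`).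
-/

open MvPolynomial

/-- `P = [v] ∈ ℙ²(k)` is a Galois point for the DGZ curve `C`.  Here the function field
`k(C)` is presented as a field `L` with a `k`-algebra map `φ : k[X,Y] → L` (to be assumed
to have kernel `(F(X,Y,1))` and fraction-generating image), a linear form `a₀x + a₁y + a₂z`
vanishing at `P` restricts on the chart `z = 1` to `φ(a₀X + a₁Y + a₂)`, and `P` is a Galois
point if for any two linearly independent linear forms `L₁, L₂` vanishing at `P` the
extension `k(C) / k(L₁/L₂)` is Galois. -/
def DGZ_IsGaloisPoint (p n : ℕ) [Fact p.Prime]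
    (L : Type) [Field L] [Algebra (DGZ_k p n) L]
    (φ : MvPolynomial (Fin 2) (DGZ_k p n) →ₐ[DGZ_k p n] L)
    (v : Fin 3 → DGZ_k p n) : Prop :=
  ∀ a b : Fin 3 → DGZ_k p n,
    (∑ i : Fin 3, a i * v i = 0) → (∑ i : Fin 3, b i * v i = 0) →
    LinearIndependent (DGZ_k p n) ![a, b] →
    IsGalois ↥(IntermediateField.adjoin (DGZ_k p n)
      {φ (C (a 0) * X 0 + C (a 1) * X 1 + C (a 2)) /
        φ (C (b 0) * X 0 + C (b 1) * X 1 + C (b 2))}) L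

/-! ### The extension generated by a root of the Frobenius determinant -/

lemma mem_range_of_pow_card {F L : Type*} [Field F] [Finite F] [Field L] (ι : F →+* L)
    {x : L} (hx : x ^ Nat.card F = x) : ∃ a, ι a = x := by
  classical
  have : Fintype F := Fintype.ofFinite F
  rw [Nat.card_eq_fintype_card] at hx
  have hs : (Polynomial.X ^ Fintype.card F - Polynomial.X : Polynomial F).Splits := by
    rw [Polynomial.splits_iff_card_roots, FiniteField.roots_X_pow_card_sub_X, ← Finset.card_def,
      Finset.card_univ, FiniteField.X_pow_card_sub_X_natDegree_eq F Fintype.one_lt_card]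
  have hr := hs.roots_map ι
  have hx' : x ∈ ((Polynomial.X ^ Fintype.card F - Polynomial.X : Polynomial F).map ι).roots := by
    rw [Polynomial.mem_roots (Polynomial.map_ne_zero
      (FiniteField.X_pow_card_sub_X_ne_zero F Fintype.one_lt_card))]
    simp [hx]
  rw [hr, FiniteField.roots_X_pow_card_sub_X, Multiset.mem_map] at hx'
  obtain ⟨a, -, ha⟩ := hx'
  exact ⟨a, ha⟩

/-- `𝔽_q`-linear combinations commute with the `q ^ m`-power map. -/
lemma linComb_pow {F L : Type*} [Field F] [Finite F] [Field L] (p n : ℕ) [Fact p.Prime]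
    [CharP L p] (hF : Nat.card F = p ^ n) (ι : F →+* L) (m : ℕ) (c : Fin 3 → F) (f : Fin 3 → L) :
    (∑ i, ι (c i) * f i) ^ (p ^ n) ^ m = ∑ i, ι (c i) * f i ^ (p ^ n) ^ m := by
  have : Fintype F := Fintype.ofFinite F
  have hc (a : F) : ι a ^ (p ^ n) ^ m = ι a := by
    rw [← map_pow, ← hF, Nat.card_eq_fintype_card, FiniteField.pow_card_pow]
  rw [← pow_mul, sum_pow_char_pow, pow_mul]
  simp_rw [mul_pow, hc]

/-- If `1, τ, η` are linearly independent over `F = 𝔽_q`, `τ` lies in `K`, `L = K(η)` and the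
determinant with rows `(f, f^q, f^{q³})`, `f = 1, τ, η`, vanishes, then `L / K` is Galois. As a
function of its third row the determinant is a `q`-polynomial over `K` of degree `q³`, and it
vanishes on the `q³` distinct elements of the `F`-span of `1, τ, η`. -/
lemma isGalois_of_frobenius_det {F K L : Type*} [Field F] [Finite F] [Field K] [Field L]
    [Algebra K L]
    (p n : ℕ) [Fact p.Prime] [CharP L p] (hn : 0 < n) (hF : Nat.card F = p ^ n) (ι : F →+* L)
    (t : K) (η : L)
    (hη : IntermediateField.adjoin K {η} = ⊤)
    (hind : ∀ c : Fin 3 → F, ∑ i, ι (c i) * ![1, algebraMap K L t, η] i = 0 → c = 0)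
    (hrel : Matrix.det (Matrix.of fun i j : Fin 3 =>
      ![1, algebraMap K L t, η] i ^ (![1, p ^ n, (p ^ n) ^ 3] j)) = 0) :
    IsGalois K L := by
  classical
  have : Fintype F := Fintype.ofFinite F
  set τ := algebraMap K L t with hτ
  set q := p ^ n with hq
  have hq1 : 1 < q := Nat.one_lt_pow hn.ne' (Fact.out : p.Prime).one_lt
  have hq3 : q < q ^ 3 := lt_self_pow₀ hq1 (by norm_num)
  have hτq : τ ^ q - τ ≠ 0 := by
    intro h
    obtain ⟨a, ha⟩ := mem_range_of_pow_card ι (x := τ) (by rw [hF]; exact sub_eq_zero.mp h)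
    have := congrFun (hind ![-a, 1, 0] (by simp [Fin.sum_univ_three, ha])) 1
    simp at this
  have htq : t ^ q - t ≠ 0 := by
    intro h
    apply hτq
    rw [hτ, ← map_pow, ← map_sub, h, map_zero]
  -- the determinant with rows given by `1`, `t` and the variable
  let g : Polynomial K := Polynomial.C (t ^ q - t) * Polynomial.X ^ q ^ 3 +
    (Polynomial.C (t - t ^ q ^ 3) * Polynomial.X ^ q +
      Polynomial.C (t ^ q ^ 3 - t ^ q) * Polynomial.X)
  have hlow : (Polynomial.C (t - t ^ q ^ 3) * Polynomial.X ^ q +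
      Polynomial.C (t ^ q ^ 3 - t ^ q) * Polynomial.X).natDegree < q ^ 3 := by
    refine lt_of_le_of_lt (Polynomial.natDegree_add_le_of_degree_le (n := q)
      (Polynomial.natDegree_C_mul_X_pow_le _ _) ?_) hq3
    exact (Polynomial.natDegree_C_mul_le _ _).trans (Polynomial.natDegree_X_le.trans hq1.le)
  have hdeg : g.natDegree = q ^ 3 := by
    have h1 := Polynomial.natDegree_C_mul_X_pow (q ^ 3) _ htq
    rw [← h1]
    exact Polynomial.natDegree_add_eq_left_of_natDegree_lt (by rw [h1]; exact hlow)
  have hg0 : g ≠ 0 := by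
    intro h
    rw [h, Polynomial.natDegree_zero] at hdeg
    omega
  let β : (Fin 3 → F) → L := fun c => ∑ i, ι (c i) * ![1, τ, η] i
  have hG (x : L) : Polynomial.aeval x g =
      (τ ^ q - τ) * x ^ q ^ 3 + (τ - τ ^ q ^ 3) * x ^ q + (τ ^ q ^ 3 - τ ^ q) * x := by
    simp [g, hτ, add_assoc]
  have hGη : (τ ^ q - τ) * η ^ q ^ 3 + (τ - τ ^ q ^ 3) * η ^ q + (τ ^ q ^ 3 - τ ^ q) * η = 0 := by
    rw [← hrel, Matrix.det_fin_three]
    simp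
    ring
  have hroot (c : Fin 3 → F) : Polynomial.aeval (β c) g = 0 := by
    have h1 := linComb_pow p n hF ι 1 c ![1, τ, η]
    have h3 := linComb_pow p n hF ι 3 c ![1, τ, η]
    rw [pow_one] at h1
    rw [hG]
    simp only [β]
    rw [h1, h3]
    simp only [Fin.sum_univ_three, Matrix.cons_val, one_pow]
    linear_combination ι (c 2) * hGη
  have hinj : Function.Injective β := by
    intro c d h
    rw [← sub_eq_zero]
    refine hind _ ?_
    simp only [Pi.sub_apply, map_sub, sub_mul, Finset.sum_sub_distrib]
    exact sub_eq_zero.mpr h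
  have hsub : Finset.univ.image β ⊆ (g.aroots L).toFinset := by
    intro x hx
    obtain ⟨c, -, rfl⟩ := Finset.mem_image.mp hx
    rw [Multiset.mem_toFinset, Polynomial.mem_aroots]
    exact ⟨hg0, hroot c⟩
  have hcard : q ^ 3 ≤ (g.aroots L).toFinset.card := by
    refine le_trans (le_of_eq ?_) (Finset.card_le_card hsub)
    rw [Finset.card_image_of_injective _ hinj, Finset.card_univ, Fintype.card_fun,
      ← Nat.card_eq_fintype_card, hF, Fintype.card_fin]
  have hmd : (g.map (algebraMap K L)).natDegree = q ^ 3 := by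
    rw [Polynomial.natDegree_map, hdeg]
  have hle1 := Multiset.toFinset_card_le (g.aroots L)
  have hle2 : (g.aroots L).card ≤ q ^ 3 := hmd ▸ Polynomial.card_roots' _
  have hsplit : (g.map (algebraMap K L)).Splits := by
    rw [Polynomial.splits_iff_card_roots, hmd]
    exact le_antisymm hle2 (hcard.trans hle1)
  have hsep : g.Separable := by
    rw [← Polynomial.card_rootSet_eq_natDegree_iff_of_splits hg0 hsplit, hdeg]
    simp_rw [Polynomial.rootSet_def, Finset.coe_sort_coe, Fintype.card_coe]
    exact le_antisymm (hle1.trans hle2) hcard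
  have : g.IsSplittingField K L := by
    rw [isSplittingField_iff_intermediateField]
    refine ⟨hsplit, top_le_iff.mp (hη ▸ IntermediateField.adjoin.mono _ _ _ ?_)⟩
    rw [Set.singleton_subset_iff, Polynomial.mem_rootSet]
    exact ⟨hg0, by rw [hG, hGη]⟩
  exact IsGalois.of_separable_splitting_field hsep

/-! ### The curve lies on no line -/

lemma map_det_pow {F R : Type*} [CommRing F] [CommRing R] (θ : MvPolynomial (Fin 3) F →+* R)
    (e : Fin 3 → ℕ) :
    θ (Matrix.det (Matrix.of fun i j : Fin 3 => (X i : MvPolynomial (Fin 3) F) ^ e j)) =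
      Matrix.det (Matrix.of fun i j : Fin 3 => θ (X i) ^ e j) := by
  rw [RingHom.map_det]
  congr 1
  ext i j
  simp

/-- The dehomogenized equation divides no nonzero polynomial of degree at most one: viewed in
`k[Y][X]`, `D₁` has degree at least `q³` in `X` and `D₂` at most `q²`, so `F` has degree at least
`q³ - q² > 1` in `X`. -/
lemma DGZ_linear_form_eq_zero_of_dvd (p n : ℕ) [Fact p.Prime] (hn : 0 < n)
    (F : MvPolynomial (Fin 3) (GaloisField p n)) (hF : DGZ_D2 p n * F = DGZ_D1 p n)
    (c : Fin 3 → DGZ_k p n)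
    (hdvd : DGZ_affine p n F ∣ C (c 0) * X 0 + C (c 1) * X 1 + C (c 2)) : c = 0 := by
  have hq1 : 1 < p ^ n := Nat.one_lt_pow hn.ne' (Fact.out : p.Prime).one_lt
  have hq2 : p ^ n < (p ^ n) ^ 2 := lt_self_pow₀ hq1 (by norm_num)
  have hq3 : (p ^ n) ^ 2 + 1 < (p ^ n) ^ 3 := by nlinarith
  have hne : (p ^ n) ^ 3 ≠ 1 := by omega
  have hne' : (p ^ n) ^ 3 ≠ p ^ n := by omega
  -- `Θ` is the identification of `k[X, Y]` with `k[Y][X]`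
  let Θ : MvPolynomial (Fin 2) (DGZ_k p n) →ₐ[DGZ_k p n] Polynomial (Polynomial (DGZ_k p n)) :=
    MvPolynomial.aeval ![Polynomial.X, Polynomial.C Polynomial.X]
  let θ : MvPolynomial (Fin 3) (GaloisField p n) →+* Polynomial (Polynomial (DGZ_k p n)) :=
    Θ.toRingHom.comp ((MvPolynomial.aeval ![X 0, X 1, 1] :
      MvPolynomial (Fin 3) (DGZ_k p n) →ₐ[DGZ_k p n]
        MvPolynomial (Fin 2) (DGZ_k p n)).toRingHom.comp
      (MvPolynomial.map (algebraMap (GaloisField p n) (DGZ_k p n))))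
  have hθF : θ F = Θ (DGZ_affine p n F) := rfl
  have hθ0 : θ (X 0) = Polynomial.X := by simp [θ, Θ]
  have hθ1 : θ (X 1) = Polynomial.C Polynomial.X := by simp [θ, Θ]
  have hθ2 : θ (X 2) = 1 := by simp [θ, Θ]
  have hmul : θ (DGZ_D2 p n) * θ F = θ (DGZ_D1 p n) := by rw [← map_mul, hF]
  have hform (e : ℕ) : θ (Matrix.det (Matrix.of fun i j : Fin 3 =>
        (X i : MvPolynomial (Fin 3) (GaloisField p n)) ^ (![1, p ^ n, e] j))) =
      Polynomial.C (Polynomial.X - Polynomial.X ^ p ^ n) * Polynomial.X ^ e +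
        Polynomial.C (Polynomial.X ^ e - Polynomial.X) * Polynomial.X ^ p ^ n +
        Polynomial.C (Polynomial.X ^ p ^ n - Polynomial.X ^ e) * Polynomial.X := by
    rw [map_det_pow, Matrix.det_fin_three]
    simp only [Matrix.of_apply, hθ0, hθ1, hθ2, Matrix.cons_val, one_pow, pow_one, mul_one,
      map_sub, map_pow]
    ring
  have hD1 : (θ (DGZ_D1 p n)).coeff ((p ^ n) ^ 3) =
      Polynomial.X - Polynomial.X ^ p ^ n := by
    rw [DGZ_D1, hform, Polynomial.coeff_add, Polynomial.coeff_add, Polynomial.coeff_C_mul,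
      Polynomial.coeff_C_mul, Polynomial.coeff_C_mul, Polynomial.coeff_X_pow_self,
      Polynomial.coeff_X_pow, if_neg hne', Polynomial.coeff_X, if_neg hne.symm]
    ring
  have hD1deg : (p ^ n) ^ 3 ≤ (θ (DGZ_D1 p n)).natDegree := by
    apply Polynomial.le_natDegree_of_ne_zero
    rw [hD1, ← neg_sub, neg_ne_zero]
    exact FiniteField.X_pow_card_sub_X_ne_zero _ hq1
  have hD2deg : (θ (DGZ_D2 p n)).natDegree ≤ (p ^ n) ^ 2 := by
    rw [DGZ_D2, hform]
    refine Polynomial.natDegree_add_le_of_degree_le (Polynomial.natDegree_add_le_of_degree_le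
      (Polynomial.natDegree_C_mul_X_pow_le _ _)
      ((Polynomial.natDegree_C_mul_X_pow_le _ _).trans hq2.le))
      ((Polynomial.natDegree_C_mul_le _ _).trans (Polynomial.natDegree_X_le.trans ?_))
    omega
  have hne1 : θ (DGZ_D1 p n) ≠ 0 := by
    intro h; rw [h, Polynomial.natDegree_zero] at hD1deg; omega
  rw [← hmul] at hne1 hD1deg
  rw [Polynomial.natDegree_mul (left_ne_zero_of_mul hne1) (right_ne_zero_of_mul hne1)] at hD1deg
  have hl : Θ (C (c 0) * X 0 + C (c 1) * X 1 + C (c 2)) =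
      Polynomial.C (Polynomial.C (c 0)) * Polynomial.X +
      Polynomial.C (Polynomial.C (c 1) * Polynomial.X + Polynomial.C (c 2)) := by
    simp [Θ, MvPolynomial.algHom_C, Polynomial.algebraMap_apply, add_assoc]
  have hz : Θ (C (c 0) * X 0 + C (c 1) * X 1 + C (c 2)) = 0 := by
    by_contra hnz
    have h1 := Polynomial.natDegree_le_of_dvd (map_dvd Θ hdvd) hnz
    rw [← hθF] at h1
    have h2 : (Θ (C (c 0) * X 0 + C (c 1) * X 1 + C (c 2))).natDegree ≤ 1 := by
      rw [hl]; exact Polynomial.natDegree_linear_le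
    omega
  rw [hl] at hz
  have h0 := congrArg (fun f => (f.coeff 1).coeff 0) hz
  have h1 := congrArg (fun f => (f.coeff 0).coeff 1) hz
  have h2 := congrArg (fun f => (f.coeff 0).coeff 0) hz
  simp [Polynomial.coeff_C] at h0 h1 h2
  ext i
  fin_cases i <;> simp [h0, h1, h2]

/-! ### Coordinates adapted to a rational point -/

/-- The vanishing of the determinant `D₁` is preserved by an `𝔽_q`-linear substitution followed by
scaling. -/
lemma det_frobenius_eq_zero {F L : Type*} [Field F] [Finite F] [Field L] (p n : ℕ)
    [Fact p.Prime] [CharP L p] (hF : Nat.card F = p ^ n) (ι : F →+* L) (ξ : Fin 3 → L)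
    (h : Matrix.det (Matrix.of fun i j : Fin 3 => ξ i ^ (![1, p ^ n, (p ^ n) ^ 3] j)) = 0)
    (R : Matrix (Fin 3) (Fin 3) F) (v : L) :
    Matrix.det (Matrix.of fun i j : Fin 3 =>
      ((∑ l, ι (R i l) * ξ l) / v) ^ (![1, p ^ n, (p ^ n) ^ 3] j)) = 0 := by
  have hpow (i j : Fin 3) : (∑ l, ι (R i l) * ξ l) ^ (![1, p ^ n, (p ^ n) ^ 3] j) =
      ∑ l, ι (R i l) * ξ l ^ (![1, p ^ n, (p ^ n) ^ 3] j) := by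
    fin_cases j
    · simp
    · simpa using linComb_pow p n hF ι 1 (R i) ξ
    · exact linComb_pow p n hF ι 3 (R i) ξ
  have hmul : (Matrix.of fun i j : Fin 3 =>
      ((∑ l, ι (R i l) * ξ l) / v) ^ (![1, p ^ n, (p ^ n) ^ 3] j)) =
      Matrix.of fun i j => (fun j => (v ^ (![1, p ^ n, (p ^ n) ^ 3] j))⁻¹) j *
        (R.map ι * Matrix.of fun i j : Fin 3 => ξ i ^ (![1, p ^ n, (p ^ n) ^ 3] j)) i j := by
    ext i j
    rw [Matrix.of_apply, Matrix.of_apply, div_pow, hpow, Matrix.mul_apply, div_eq_inv_mul]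
    rfl
  rw [hmul, Matrix.det_mul_row, Matrix.det_mul, h, mul_zero, mul_zero]

/-- An `F`-basis of the linear forms on `F³` whose first two members vanish at `w`. -/
lemma exists_adapted_matrix {F : Type*} [Field F] (w : Fin 3 → F) (hw : w ≠ 0) :
    ∃ R : Matrix (Fin 3) (Fin 3) F, R.det ≠ 0 ∧ ∑ l, R 0 l * w l = 0 ∧ ∑ l, R 1 l * w l = 0 := by
  obtain ⟨j, hj⟩ := Function.ne_iff.mp hw
  rw [Pi.zero_apply] at hj
  fin_cases j
  · refine ⟨!![-w 1, w 0, 0; -w 2, 0, w 0; 1, 0, 0], ?_, ?_, ?_⟩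
    · simpa [Matrix.det_fin_three] using hj
    · simp [Fin.sum_univ_three]; ring
    · simp [Fin.sum_univ_three]; ring
  · refine ⟨!![w 1, -w 0, 0; 0, -w 2, w 1; 0, 1, 0], ?_, ?_, ?_⟩
    · simpa [Matrix.det_fin_three] using hj
    · simp [Fin.sum_univ_three]; ring
    · simp [Fin.sum_univ_three]; ring
  · refine ⟨!![w 2, 0, -w 0; 0, w 2, -w 1; 0, 0, 1], ?_, ?_, ?_⟩
    · simpa [Matrix.det_fin_three] using hj
    · simp [Fin.sum_univ_three]; ring
    · simp [Fin.sum_univ_three]; ring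

lemma exists_comb_of_orthogonal {k : Type*} [Field k] {v a b : Fin 3 → k} (hv : v ≠ 0)
    (ha : ∑ i, a i * v i = 0) (hb : ∑ i, b i * v i = 0) (hab : LinearIndependent k ![a, b])
    (r : Fin 3 → k) (hr : ∑ i, r i * v i = 0) : ∃ s t : k, s • a + t • b = r := by
  let f : Module.Dual k (Fin 3 → k) := (LinearMap.lsum k (fun _ => k) k) fun i =>
    v i • LinearMap.id
  have hf (c : Fin 3 → k) : f c = ∑ i, c i * v i := by simp [f, mul_comm]
  have hf0 : f ≠ 0 := by
    obtain ⟨j, hj⟩ := Function.ne_iff.mp hv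
    intro h
    apply hj
    have := hf (Pi.single j 1)
    rw [h] at this
    simpa [Pi.single_apply] using this.symm
  have hle : Submodule.span k (Set.range ![a, b]) ≤ LinearMap.ker f := by
    rw [Submodule.span_le]
    rintro _ ⟨i, rfl⟩
    fin_cases i
    · simpa [hf] using ha
    · simpa [hf] using hb
  have hfr := Module.Dual.finrank_ker_add_one_of_ne_zero hf0
  have heq := Submodule.eq_of_le_of_finrank_eq hle (by
    rw [finrank_span_eq_card hab, Fintype.card_fin]
    rw [Module.finrank_fin_fun] at hfr
    omega)
  have hmem : r ∈ LinearMap.ker f := by rw [LinearMap.mem_ker, hf, hr]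
  rw [← heq, Matrix.range_cons, Matrix.range_cons, Matrix.range_empty, Set.union_empty,
    Set.singleton_union, Submodule.mem_span_pair] at hmem
  exact hmem

/-! ### Galois points -/

/-- Every `𝔽_q`-rational point of `ℙ²` is a Galois point for the DGZ curve:
`ℙ²(𝔽_q) ⊆ Δ(C)`. -/
theorem DGZ_rational_points_are_galois (p n : ℕ) [Fact p.Prime] (hn : 0 < n)
    (F : MvPolynomial (Fin 3) (GaloisField p n)) (hF : DGZ_D2 p n * F = DGZ_D1 p n)
    (L : Type) [Field L] [Algebra (DGZ_k p n) L]
    (φ : MvPolynomial (Fin 2) (DGZ_k p n) →ₐ[DGZ_k p n] L)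
    (hker : RingHom.ker φ.toRingHom = Ideal.span {DGZ_affine p n F})
    (hfrac : ∀ y : L, ∃ a b : MvPolynomial (Fin 2) (DGZ_k p n), φ b ≠ 0 ∧ y = φ a / φ b)
    (w : Fin 3 → GaloisField p n) (hw : w ≠ 0) :
    DGZ_IsGaloisPoint p n L φ
      (fun i => algebraMap (GaloisField p n) (DGZ_k p n) (w i)) := by
  intro a b ha hb hab
  set κ := algebraMap (GaloisField p n) (DGZ_k p n) with hκ
  set lam := algebraMap (DGZ_k p n) L with hlam
  let ι : GaloisField p n →+* L := lam.comp κ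
  let ξ : Fin 3 → L := ![φ (X 0), φ (X 1), 1]
  have hcard : Nat.card (GaloisField p n) = p ^ n := GaloisField.card p n hn.ne'
  have : CharP L p := charP_of_injective_ringHom ι.injective p
  have hφ (c : Fin 3 → DGZ_k p n) :
      φ (C (c 0) * X 0 + C (c 1) * X 1 + C (c 2)) = ∑ i, lam (c i) * ξ i := by
    simp [Fin.sum_univ_three, ξ, MvPolynomial.algHom_C, hlam]
  have hker' (f) (hf : φ f = 0) : DGZ_affine p n F ∣ f := by
    rw [← Ideal.mem_span_singleton, ← hker]
    exact hf
  have hindk (c : Fin 3 → DGZ_k p n) (hc : ∑ i, lam (c i) * ξ i = 0) : c = 0 :=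
    DGZ_linear_form_eq_zero_of_dvd p n hn F hF c (hker' _ (by rw [hφ, hc]))
  -- the relation `D₁(x, y, 1) = 0` in the function field
  have hrel : Matrix.det (Matrix.of fun i j : Fin 3 =>
      ξ i ^ (![1, p ^ n, (p ^ n) ^ 3] j)) = 0 := by
    let θ : MvPolynomial (Fin 3) (GaloisField p n) →+* L :=
      φ.toRingHom.comp ((MvPolynomial.aeval ![X 0, X 1, 1] :
        MvPolynomial (Fin 3) (DGZ_k p n) →ₐ[DGZ_k p n]
          MvPolynomial (Fin 2) (DGZ_k p n)).toRingHom.comp (MvPolynomial.map κ))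
    have hθF : θ F = 0 := by
      change DGZ_affine p n F ∈ RingHom.ker φ.toRingHom
      rw [hker]
      exact Ideal.mem_span_singleton_self _
    have hθX (i : Fin 3) : θ (X i) = ξ i := by
      fin_cases i <;> simp [θ, ξ]
    have h := congrArg θ hF
    rw [map_mul, hθF, mul_zero, DGZ_D1, map_det_pow] at h
    simp_rw [hθX] at h
    exact h.symm
  obtain ⟨R, hRdet, hR0, hR1⟩ := exists_adapted_matrix w hw
  -- `ζ 0` and `ζ 1` come from rational forms vanishing at `w`; `ζ` generates the same forms as `ξ`
  let ζ : Fin 3 → L := fun i => ∑ l, ι (R i l) * ξ l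
  have hindζ (c : Fin 3 → GaloisField p n) (hc : ∑ i, ι (c i) * ζ i = 0) : c = 0 := by
    apply Matrix.eq_zero_of_vecMul_eq_zero hRdet
    have h0 := hindk (fun l => κ (Matrix.vecMul c R l)) (by
      rw [← hc]
      simp only [ζ, Matrix.vecMul, dotProduct, map_sum, map_mul, Finset.sum_mul, Finset.mul_sum,
        ι, RingHom.comp_apply]
      rw [Finset.sum_comm]
      simp_rw [mul_assoc])
    ext l
    have := congrFun h0 l
    simpa using this
  have hv : ζ 0 ≠ 0 := by
    intro h
    have := congrFun (hindζ (Pi.single 0 1) (by simp [Fin.sum_univ_three, h])) 0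
    simp at this
  have hζk (i : Fin 3) : ζ i = ∑ l, lam (κ (R i l)) * ξ l := rfl
  have hw' : (fun i => κ (w i)) ≠ 0 := by
    intro h
    apply hw
    ext i
    simpa using congrFun h i
  -- both pairs of forms span the pencil through `w`, so `ζ 1 / ζ 0` is a Möbius image of `A / B`
  have hcomb (i : Fin 3) (hi : ∑ l, R i l * w l = 0) : ∃ s t : DGZ_k p n,
      ζ i = lam s * (∑ l, lam (a l) * ξ l) + lam t * (∑ l, lam (b l) * ξ l) := by
    obtain ⟨s, t, hst⟩ := exists_comb_of_orthogonal hw' ha hb hab (fun l => κ (R i l)) (by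
      simp_rw [← map_mul, ← map_sum, hi, map_zero])
    refine ⟨s, t, ?_⟩
    rw [hζk, Finset.mul_sum, Finset.mul_sum, ← Finset.sum_add_distrib]
    refine Finset.sum_congr rfl fun l _ => ?_
    rw [← congrFun hst l]
    simp only [Pi.add_apply, Pi.smul_apply, smul_eq_mul, map_add, map_mul]
    ring
  rw [hφ, hφ]
  set A := ∑ l, lam (a l) * ξ l with hA
  set B := ∑ l, lam (b l) * ξ l with hB
  have hB0 : B ≠ 0 := fun h => hab.ne_zero 1 (hindk b h)
  set K := IntermediateField.adjoin (DGZ_k p n) {A / B} with hK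
  have hABK : A / B ∈ K := IntermediateField.subset_adjoin _ _ rfl
  have hτK : ζ 1 / ζ 0 ∈ K := by
    obtain ⟨s, t, h1⟩ := hcomb 1 hR1
    obtain ⟨s', t', h0⟩ := hcomb 0 hR0
    have hform (s t : DGZ_k p n) : (lam s * A + lam t * B) / B ∈ K := by
      have : (lam s * A + lam t * B) / B = lam s * (A / B) + lam t := by
        field_simp
      rw [this]
      exact add_mem (mul_mem (K.algebraMap_mem s) hABK) (K.algebraMap_mem t)
    rw [← div_div_div_cancel_right₀ hB0, h1, h0]
    exact div_mem (hform _ _) (hform _ _)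
  have hgen : (![1, algebraMap K L ⟨ζ 1 / ζ 0, hτK⟩, ζ 2 / ζ 0] : Fin 3 → L) =
      fun i => ζ i / ζ 0 := by
    ext i
    fin_cases i
    · simp [hv]
    · rfl
    · rfl
  refine isGalois_of_frobenius_det p n hn hcard ι (⟨ζ 1 / ζ 0, hτK⟩ : K) (ζ 2 / ζ 0) ?_ ?_ ?_
  · set E := IntermediateField.adjoin K {ζ 2 / ζ 0} with hE
    have hkE (c : DGZ_k p n) : lam c ∈ E := E.algebraMap_mem (algebraMap (DGZ_k p n) K c)
    have hζE (i : Fin 3) : ζ i / ζ 0 ∈ E := by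
      rw [← congrFun hgen i]
      fin_cases i
      · exact one_mem E
      · exact E.algebraMap_mem _
      · exact IntermediateField.subset_adjoin _ _ rfl
    have hξζ (l : Fin 3) : ξ l = ∑ i, ι (R⁻¹ l i) * ζ i := by
      have hinv : R⁻¹ * R = 1 := Matrix.nonsing_inv_mul R (isUnit_iff_ne_zero.mpr hRdet)
      simp only [ζ, Finset.mul_sum]
      rw [Finset.sum_comm]
      simp_rw [← mul_assoc, ← map_mul, ← Finset.sum_mul, ← map_sum, ← Matrix.mul_apply, hinv]
      simp [Matrix.one_apply]
    have hξE' (l : Fin 3) : ξ l / ζ 0 ∈ E := by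
      rw [hξζ l, Finset.sum_div]
      refine sum_mem fun i _ => ?_
      rw [mul_div_assoc]
      exact mul_mem (hkE _) (hζE i)
    have hξE (l : Fin 3) : ξ l ∈ E := by
      have : ξ l = (ξ l / ζ 0) / (ξ 2 / ζ 0) := by
        simp [ξ, hv]
      rw [this]
      exact div_mem (hξE' l) (hξE' 2)
    have hφE (f : MvPolynomial (Fin 2) (DGZ_k p n)) : φ f ∈ E := by
      induction f using MvPolynomial.induction_on with
      | C c => rw [MvPolynomial.algHom_C]; exact hkE c
      | add f g hf hg => rw [map_add]; exact add_mem hf hg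
      | mul_X f i hf =>
        rw [map_mul]
        refine mul_mem hf ?_
        fin_cases i
        · exact hξE 0
        · exact hξE 1
    rw [eq_top_iff]
    intro y _
    obtain ⟨f, g, -, rfl⟩ := hfrac y
    exact div_mem (hφE f) (hφE g)
  · intro c hc
    rw [hgen] at hc
    apply hindζ
    simp_rw [← mul_div_assoc, ← Finset.sum_div] at hc
    simpa [hv] using hc
  · rw [hgen]
    exact det_frobenius_eq_zero p n hcard ι ξ hrel R (ζ 0)
end
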